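/- arXiv:1301.1235 — 3 statements merged into one kernel-verified Lean document; each statement's English description precedes it below -/
import Mathlib

section
/- Two real polynomials g and h, each of degree at least 1, are equivalent if and only if their adjusted representations coincide: g̃ = h̃. -/
/-!
Polynomials are translated by `taylor`, an additive action of the base field. Translating `p` by `r`
keeps the leading coefficient `a` and adds `k * a * r` to the next one, where `k` is the degree, so
the quotient `s` of the next coefficient by `k * a` grows by exactly `r`. Translating by `-s`
therefore leads to the same polynomial from every point of the orbit of `p`.
-/

open Polynomial

noncomputable section

/-- Two polynomials are equivalent if `f(·) = g(· + δ)` for some `δ ∈ ℝ`. -/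
def PolyEquiv (f g : Polynomial ℝ) : Prop :=
  ∃ δ : ℝ, ∀ x : ℝ, f.eval x = g.eval (x + δ)

/-- The shift making a polynomial `g = ∑ a_i t^i/i!` of degree `k` adjusted
(i.e. killing the coefficient `a_{k−1}`), namely `a_{k−1}/a_k = coeff_{k−1}/(k·coeff_k)`. -/
def adjShift (g : Polynomial ℝ) : ℝ :=
  g.coeff (g.natDegree - 1) / ((g.natDegree : ℝ) * g.leadingCoeff)

/-- The adjusted representation `g̃(·) = g(· − a_{k−1}/a_k)` of a polynomial `g`. -/
def adjRep (g : Polynomial ℝ) : Polynomial ℝ :=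
  g.comp (Polynomial.X - Polynomial.C (adjShift g))

section Semiring

variable {R : Type*} [Semiring R]

lemma eval_hasseDeriv_natDegree_sub_one {p : R[X]} (hp : p.natDegree ≠ 0) (r : R) :
    (hasseDeriv (p.natDegree - 1) p).eval r = p.nextCoeff + p.natDegree * p.leadingCoeff * r := by
  have degree_lt : (hasseDeriv (p.natDegree - 1) p).natDegree < 2 :=
    (natDegree_hasseDeriv_le p _).trans_lt (by lia)
  have succ_pred : 1 + (p.natDegree - 1) = p.natDegree := by lia
  have choose_pred : p.natDegree.choose (p.natDegree - 1) = p.natDegree := by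
    rw [Nat.choose_symm (by lia), Nat.choose_one_right]
  rw [eval_eq_sum_range' degree_lt, nextCoeff_of_natDegree_pos (by lia)]
  simp [Finset.sum_range_succ, hasseDeriv_coeff, succ_pred, choose_pred]

lemma nextCoeff_taylor (r : R) (p : R[X]) :
    (taylor r p).nextCoeff = p.nextCoeff + p.natDegree * p.leadingCoeff * r := by
  by_cases hp : p.natDegree = 0
  · simp [nextCoeff, hp]
  · rw [nextCoeff_of_natDegree_pos (by rw [natDegree_taylor]; lia), natDegree_taylor, taylor_coeff,
      eval_hasseDeriv_natDegree_sub_one hp]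

end Semiring

lemma eq_taylor_iff_forall_eval {R : Type*} [CommRing R] [IsDomain R] [Infinite R]
    {p q : R[X]} {r : R} : p = taylor r q ↔ ∀ x, p.eval x = q.eval (x + r) := by
  simp only [← taylor_eval]
  exact ⟨fun h _ => h ▸ rfl, Polynomial.funext⟩

section Field

variable {K : Type*} [Field K] {p q : K[X]}

/-- The translation of the Tschirnhaus transformation, which removes the next-to-leading
coefficient of `p`: minus the mean of the roots of `p`, counted with multiplicity in a splitting
field. If the degree of `p` vanishes in `K`, no such translation need exist and the value is `0`. -/
def tschirnhausShift (p : K[X]) : K :=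
  p.nextCoeff / (p.natDegree * p.leadingCoeff)

/-- The depressed form of `p`: the translate of `p` whose next-to-leading coefficient vanishes if
the degree is nonzero in `K`. It generalizes `adjRep` to an arbitrary field. -/
def depressedForm (p : K[X]) : K[X] :=
  taylor (-tschirnhausShift p) p

lemma tschirnhausShift_taylor (hp : (p.natDegree : K) ≠ 0) (r : K) :
    tschirnhausShift (taylor r p) = tschirnhausShift p + r := by
  have hlead : p.leadingCoeff ≠ 0 := by
    rw [leadingCoeff_ne_zero]
    rintro rfl
    simp at hp
  rw [tschirnhausShift, tschirnhausShift, natDegree_taylor, leadingCoeff_taylor, nextCoeff_taylor]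
  field_simp

lemma depressedForm_taylor (hp : (p.natDegree : K) ≠ 0) (r : K) :
    depressedForm (taylor r p) = depressedForm p := by
  rw [depressedForm, depressedForm, tschirnhausShift_taylor hp, taylor_taylor, neg_add,
    neg_add_cancel_right]

lemma taylor_tschirnhausShift_depressedForm (p : K[X]) :
    taylor (tschirnhausShift p) (depressedForm p) = p := by
  rw [depressedForm, taylor_taylor, add_neg_cancel, taylor_zero]

theorem polyEquiv_iff_adjRep_eq_general (hq : (q.natDegree : K) ≠ 0) :
    (∃ r, p = taylor r q) ↔ depressedForm p = depressedForm q := by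
  constructor
  · rintro ⟨r, rfl⟩
    exact depressedForm_taylor hq r
  · intro h
    refine ⟨tschirnhausShift p - tschirnhausShift q, ?_⟩
    calc p = taylor (tschirnhausShift p) (depressedForm q) := by
          rw [← h, taylor_tschirnhausShift_depressedForm]
      _ = taylor (tschirnhausShift p - tschirnhausShift q) q := by
          rw [depressedForm, taylor_taylor, sub_eq_add_neg]

end Field

lemma polyEquiv_iff_exists_eq_taylor {f g : ℝ[X]} : PolyEquiv f g ↔ ∃ δ, f = taylor δ g :=
  exists_congr fun _ => eq_taylor_iff_forall_eval.symm

lemma adjShift_eq_tschirnhausShift {g : ℝ[X]} (hg : 1 ≤ g.natDegree) :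
    adjShift g = tschirnhausShift g := by
  rw [adjShift, tschirnhausShift, nextCoeff_of_natDegree_pos hg]

lemma adjRep_eq_depressedForm {g : ℝ[X]} (hg : 1 ≤ g.natDegree) : adjRep g = depressedForm g := by
  rw [adjRep, depressedForm, taylor_apply, adjShift_eq_tschirnhausShift hg, C_neg, sub_eq_add_neg]

/-- Lemma 4.5. Two real polynomials of degree at least 1 are
equivalent iff their adjusted representations coincide. -/
theorem polyEquiv_iff_adjRep_eq (g h : Polynomial ℝ)
    (hg : 1 ≤ g.natDegree) (hh : 1 ≤ h.natDegree) :
    PolyEquiv g h ↔ adjRep g = adjRep h := by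
  rw [polyEquiv_iff_exists_eq_taylor, adjRep_eq_depressedForm hg, adjRep_eq_depressedForm hh]
  exact polyEquiv_iff_adjRep_eq_general (Nat.cast_ne_zero.mpr (by lia))
end
end

section
/- Let g_v, h_v : ℝ → ℝ, v ∈ 𝒯, be smooth functions. Then the double commutator satisfies ⟪ ∑_{v∈𝒯} g_v(x_v) ∂_{p_v}, ∑_{v'∈𝒯} h_{v'}(x_{v'}) ∂_{p_{v'}} ⟫ = ∑_{v∈𝒯} (g_v h_v)'(x_v) ∂_{p_v}, as an identity of vector fields on ℝ^{2|V|}. -/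
open scoped Classical
open Polynomial

noncomputable section

/-- Phase space ℝ^{2|V|}: positions `q = x.1` and momenta `p = x.2`. -/
abbrev Phase (V : Type) := (V → ℝ) × (V → ℝ)

/-- Lie bracket of vector fields: `[Y,Z](x) = DZ(x)·Y(x) − DY(x)·Z(x)`. -/
def lieB {V : Type} [Fintype V] (Y Z : Phase V → Phase V) : Phase V → Phase V :=
  fun x => fderiv ℝ Z x (Y x) - fderiv ℝ Y x (Z x)

/-- The constant vector field `∂_{p_v}`. -/
def dp {V : Type} [Fintype V] [DecidableEq V] (v : V) : Phase V → Phase V :=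
  fun _ => (0, Pi.single v 1)

/-- The constant vector field `∂_{q_v}`. -/
def dq {V : Type} [Fintype V] [DecidableEq V] (v : V) : Phase V → Phase V :=
  fun _ => (Pi.single v 1, 0)

/-- The constant vector field `∑_{v ∈ A} ∂_{p_v}`. -/
def dpSum {V : Type} [Fintype V] [DecidableEq V] (A : Finset V) : Phase V → Phase V :=
  fun _ => (0, ∑ v ∈ A, Pi.single v 1)

/-- The constant vector field `∑_{v ∈ A} ∂_{q_v}`. -/
def dqSum {V : Type} [Fintype V] [DecidableEq V] (A : Finset V) : Phase V → Phase V :=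
  fun _ => (∑ v ∈ A, Pi.single v 1, 0)

/-- The drift vector field
`X₀ = −∑_{v∈V*} γ_v p_v ∂_{p_v} + ∑_{v∈V} (p_v ∂_{q_v} − U_v'(q_v) ∂_{p_v})
      − ∑_{{u,v}∈E} V_{uv}'(q_u − q_v)(∂_{p_u} − ∂_{p_v})`,
written componentwise (using the symmetry `V_{vu}(x) = V_{uv}(−x)` of the
interaction potentials, the `∂_{p_v}`-component of the edge term at a vertex `v` is
`−∑_{w ~ v} V_{vw}'(q_v − q_w)`). -/
def X0 {V : Type} [Fintype V] [DecidableEq V] (G : SimpleGraph V) [DecidableRel G.Adj]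
    (γ : V → ℝ) (U : V → ℝ → ℝ) (Vp : V → V → Polynomial ℝ) : Phase V → Phase V :=
  fun x =>
    (x.2, fun v =>
      -(γ v) * x.2 v - deriv (U v) (x.1 v) -
        ∑ w ∈ Finset.univ.filter (fun w => G.Adj v w),
          (derivative (Vp v w)).eval (x.1 v - x.1 w))

/-- The smallest collection `𝓜` of vector fields on `ℝ^{2|V|}` that contains `∂_{p_v}`
for every `v ∈ V*`, and is closed under linear combinations, Lie brackets,
bracketing with `X₀`, and multiplication by smooth scalar functions. -/
inductive MM {V : Type} [Fintype V] [DecidableEq V] (Vstar : Finset V)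
    (X₀ : Phase V → Phase V) : (Phase V → Phase V) → Prop
  | basic (v : V) (hv : v ∈ Vstar) : MM Vstar X₀ (dp v)
  | add {Y Z : Phase V → Phase V} : MM Vstar X₀ Y → MM Vstar X₀ Z → MM Vstar X₀ (Y + Z)
  | smul (a : ℝ) {Y : Phase V → Phase V} : MM Vstar X₀ Y → MM Vstar X₀ (a • Y)
  | lie {Y Z : Phase V → Phase V} : MM Vstar X₀ Y → MM Vstar X₀ Z → MM Vstar X₀ (lieB Y Z)
  | lieX {Y : Phase V → Phase V} : MM Vstar X₀ Y → MM Vstar X₀ (lieB Y X₀)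
  | mulS (f : Phase V → ℝ) (hf : ContDiff ℝ (⊤ : ℕ∞) f) {Y : Phase V → Phase V} :
      MM Vstar X₀ Y → MM Vstar X₀ (fun x => f x • Y x)

/-- A vertex `v` is controllable if `∂_{q_v} ∈ 𝓜` and `∂_{p_v} ∈ 𝓜`. -/
def Controllable {V : Type} [Fintype V] [DecidableEq V] (Vstar : Finset V)
    (X₀ : Phase V → Phase V) (v : V) : Prop :=
  MM Vstar X₀ (dq v) ∧ MM Vstar X₀ (dp v)

/-- The set 𝒯 of neighbors ("targets") of a vertex `c`. -/
def Tset {V : Type} [Fintype V] [DecidableEq V] (G : SimpleGraph V) [DecidableRel G.Adj]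
    (c : V) : Finset V :=
  Finset.univ.filter fun w => G.Adj c w

/-- `f̃_v`, the adjusted representation of `V''_{cv}`. -/
def ft {V : Type} (Vp : V → V → Polynomial ℝ) (c v : V) : Polynomial ℝ :=
  adjRep (derivative (derivative (Vp c v)))

/-- `d = max_{v∈𝒯} d_v`, the maximal degree of the adjusted polynomials `f̃_v`, `v ∈ 𝒯`. -/
def dmax {V : Type} [Fintype V] [DecidableEq V] (G : SimpleGraph V) [DecidableRel G.Adj]
    (Vp : V → V → Polynomial ℝ) (c : V) : ℕ :=
  (Tset G c).sup fun v => (ft Vp c v).natDegree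

/-- `D^d = {v ∈ 𝒯 : d_v = d}`, the neighbors of `c` of maximal adjusted degree. -/
def Dd {V : Type} [Fintype V] [DecidableEq V] (G : SimpleGraph V) [DecidableRel G.Adj]
    (Vp : V → V → Polynomial ℝ) (c : V) : Finset V :=
  (Tset G c).filter fun v => (ft Vp c v).natDegree = dmax G Vp c

/-- The coefficient `b_{vℓ}` in `f̃_v(x) = ∑_j b_{vj} x^j/j!`, i.e. `b_{vℓ} = ℓ!·coeff_ℓ(f̃_v)`. -/
def bcoef {V : Type} (Vp : V → V → Polynomial ℝ) (c v : V) (ℓ : ℕ) : ℝ :=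
  (Nat.factorial ℓ : ℝ) * (ft Vp c v).coeff ℓ

/-- The scalar function `x_v = q_c − q_v + δ_{cv}`, with `δ_{cv}` the adjusting shift
of `V''_{cv}`. -/
def xv {V : Type} [Fintype V] (Vp : V → V → Polynomial ℝ) (c v : V) : Phase V → ℝ :=
  fun x => x.1 c - x.1 v + adjShift (derivative (derivative (Vp c v)))

/-!
Bracketing a field that is affine in the momenta with a vertical field differentiates it along the
momenta only. The drift `(q, p) ↦ (p, L(q) p + F(q))` is of this kind, and so is its bracket
`(q, p) ↦ (-A, DA·p - L A)` with the vertical lift of `A = A(q)`; bracketing once more, with the lift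
of `B`, leaves the lift of `-(DB·A + DA·B)`, from which `L` and `F` have disappeared.

For the diagonal fields `A_v = g_v(x_v)` and `B_v = h_v(x_v)`, a displacement `b` of the positions
changes `x_v` by `b_c - b_v`. Since `c` is not its own neighbor, `A_c = B_c = 0`, and the
`v`-component of `-(DB·A + DA·B)` is `h_v' g_v + g_v' h_v`.
-/

section VerticalLift

variable {𝕜 E G : Type*} [NontriviallyNormedField 𝕜] [NormedAddCommGroup E] [NormedSpace 𝕜 E]
  [NormedAddCommGroup G] [NormedSpace 𝕜 G]

/-- The vertical lift `(q, p) ↦ (0, A q)` of a vector field `A` on the position space to the phase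
space `E × E`. -/
def verticalLift (A : E → E) : E × E → E × E :=
  fun x => (0, A x.1)

/-- The map `(q, p) ↦ M(q) p + f(q)` on `E × E`, affine in the momentum `p`. For `G = E × E` it is a
vector field on the phase space. -/
def fiberAffine (M : E → E →L[𝕜] G) (f : E → G) : E × E → G :=
  fun x => M x.1 x.2 + f x.1

/-- The vector field `(q, p) ↦ (p, L(q) p + F(q))` of the second-order equation
`q'' = L(q) q' + F(q)`, in which `-L` is the friction and `F` the force. -/
def secondOrderField (L : E → E →L[𝕜] E) (F : E → E) : E × E → E × E :=
  fiberAffine (fun q => .inl 𝕜 E E + .inr 𝕜 E E ∘L L q) (fun q => (0, F q))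

variable (𝕜) in
/-- The symmetric product `∇_A B + ∇_B A` of two vector fields, for the flat connection of a normed
space. -/
def symmetricProduct (A B : E → E) : E → E :=
  fun q => fderiv 𝕜 B q (A q) + fderiv 𝕜 A q (B q)

lemma fderiv_verticalLift {A : E → E} {x : E × E} (hA : DifferentiableAt 𝕜 A x.1) (u : E × E) :
    fderiv 𝕜 (verticalLift A) x u = (0, fderiv 𝕜 A x.1 u.1) := by
  have h : HasFDerivAt (verticalLift A) _ x :=
    (hasFDerivAt_const (0 : E) x).prodMk (hA.hasFDerivAt.comp x hasFDerivAt_fst)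
  simp [h.fderiv]

lemma fderiv_fiberAffine_vertical {M : E → E →L[𝕜] G} {f : E → G} {x : E × E}
    (hM : DifferentiableAt 𝕜 M x.1) (hf : DifferentiableAt 𝕜 f x.1) (b : E) :
    fderiv 𝕜 (fiberAffine M f) x (0, b) = M x.1 b := by
  have h : HasFDerivAt (fiberAffine M f) _ x :=
    ((hM.hasFDerivAt.comp x hasFDerivAt_fst).clm_apply hasFDerivAt_snd).add
      (hf.hasFDerivAt.comp x hasFDerivAt_fst)
  simp [h.fderiv]

lemma lieBracket_fiberAffine_verticalLift {M : E → E →L[𝕜] E × E} {f : E → E × E} {B : E → E}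
    {x : E × E} (hM : DifferentiableAt 𝕜 M x.1) (hf : DifferentiableAt 𝕜 f x.1)
    (hB : DifferentiableAt 𝕜 B x.1) :
    VectorField.lieBracket 𝕜 (fiberAffine M f) (verticalLift B) x
      = (0, fderiv 𝕜 B x.1 (fiberAffine M f x).1) - M x.1 (B x.1) := by
  rw [VectorField.lieBracket, fderiv_verticalLift hB]
  exact congrArg _ (fderiv_fiberAffine_vertical hM hf (B x.1))

lemma lieBracket_secondOrderField_verticalLift {L : E → E →L[𝕜] E} {F A : E → E}
    (hL : Differentiable 𝕜 L) (hF : Differentiable 𝕜 F) (hA : Differentiable 𝕜 A) :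
    VectorField.lieBracket 𝕜 (secondOrderField L F) (verticalLift A)
      = fiberAffine (fun q => .inr 𝕜 E E ∘L fderiv 𝕜 A q)
          (fun q => (-A q, -L q (A q))) := by
  have hM : Differentiable 𝕜 fun q => .inl 𝕜 E E + .inr 𝕜 E E ∘L L q := by fun_prop
  funext x
  rw [secondOrderField, lieBracket_fiberAffine_verticalLift (hM _) (by fun_prop) (hA _)]
  simp [fiberAffine, sub_eq_add_neg]

theorem lieBracket_lieBracket_secondOrderField_verticalLift {L : E → E →L[𝕜] E} {F A B : E → E}
    (hL : Differentiable 𝕜 L) (hF : Differentiable 𝕜 F) (hA : ContDiff 𝕜 2 A)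
    (hB : Differentiable 𝕜 B) :
    VectorField.lieBracket 𝕜
        (VectorField.lieBracket 𝕜 (secondOrderField L F) (verticalLift A)) (verticalLift B)
      = verticalLift (-symmetricProduct 𝕜 A B) := by
  have hA₁ : Differentiable 𝕜 A := hA.differentiable two_ne_zero
  have hM : Differentiable 𝕜 fun q => .inr 𝕜 E E ∘L fderiv 𝕜 A q := by fun_prop
  rw [lieBracket_secondOrderField_verticalLift hL hF hA₁]
  funext x
  rw [lieBracket_fiberAffine_verticalLift (hM _) (by fun_prop) (hB _)]
  simp [fiberAffine, verticalLift, symmetricProduct, sub_eq_add_neg, add_comm]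

end VerticalLift

section DiagonalField

variable {𝕜 ι : Type*} [NontriviallyNormedField 𝕜] [DecidableEq ι]

/-- The vector field `∑_{v ∈ T} g_v(q_c - q_v + δ_v) ∂_v` on the position space. -/
def diagonalField (T : Finset ι) (c : ι) (δ : ι → 𝕜) (g : ι → 𝕜 → 𝕜) : (ι → 𝕜) → ι → 𝕜 :=
  fun q => ∑ v ∈ T, Pi.single v (g v (q c - q v + δ v))

lemma diagonalField_apply (T : Finset ι) (c : ι) (δ : ι → 𝕜) (g : ι → 𝕜 → 𝕜) (q : ι → 𝕜)
    (w : ι) :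
    diagonalField T c δ g q w = if w ∈ T then g w (q c - q w + δ w) else 0 := by
  simp [diagonalField, Finset.sum_apply, Pi.single_apply]

variable {T : Finset ι} {c : ι} {δ : ι → 𝕜} {g h : ι → 𝕜 → 𝕜}

lemma hasFDerivAt_diagonalField [Finite ι] {q : ι → 𝕜}
    (hg : ∀ v ∈ T, DifferentiableAt 𝕜 (g v) (q c - q v + δ v)) :
    HasFDerivAt (diagonalField T c δ g)
      (∑ v ∈ T, ContinuousLinearMap.single 𝕜 (fun _ : ι => 𝕜) v ∘L
        (deriv (g v) (q c - q v + δ v) • (.proj c - .proj v : (ι → 𝕜) →L[𝕜] 𝕜))) q := by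
  have := Fintype.ofFinite ι
  have hx (v : ι) : HasFDerivAt (fun q : ι → 𝕜 => q c - q v + δ v)
      (.proj c - .proj v : (ι → 𝕜) →L[𝕜] 𝕜) q :=
    (.proj c - .proj v : (ι → 𝕜) →L[𝕜] 𝕜).hasFDerivAt.add_const (δ v)
  exact HasFDerivAt.fun_sum fun v hv =>
    (ContinuousLinearMap.single 𝕜 (fun _ : ι => 𝕜) v).hasFDerivAt.comp q
      ((hg v hv).hasDerivAt.comp_hasFDerivAt q (hx v))

lemma fderiv_diagonalField [Finite ι] {q : ι → 𝕜}
    (hg : ∀ v ∈ T, DifferentiableAt 𝕜 (g v) (q c - q v + δ v)) (b : ι → 𝕜) :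
    fderiv 𝕜 (diagonalField T c δ g) q b
      = ∑ v ∈ T, Pi.single v (deriv (g v) (q c - q v + δ v) * (b c - b v)) := by
  rw [(hasFDerivAt_diagonalField hg).fderiv, sum_apply]
  rfl

lemma contDiff_diagonalField [Fintype ι] {n : WithTop ℕ∞} (hg : ∀ v ∈ T, ContDiff 𝕜 n (g v)) :
    ContDiff 𝕜 n (diagonalField T c δ g) := by
  refine ContDiff.sum fun v hv => ?_
  exact (ContinuousLinearMap.single 𝕜 (fun _ : ι => 𝕜) v).contDiff.comp
    ((hg v hv).comp (by fun_prop))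

lemma symmetricProduct_diagonalField [Fintype ι] (hc : c ∉ T)
    (hg : ∀ v ∈ T, Differentiable 𝕜 (g v)) (hh : ∀ v ∈ T, Differentiable 𝕜 (h v)) :
    symmetricProduct 𝕜 (diagonalField T c δ g) (diagonalField T c δ h)
      = -diagonalField T c δ fun v => deriv fun t => g v t * h v t := by
  funext q
  rw [symmetricProduct, fderiv_diagonalField fun v hv => hh v hv _,
    fderiv_diagonalField fun v hv => hg v hv _, ← Finset.sum_add_distrib]
  refine Eq.trans (Finset.sum_congr rfl fun v hv => ?_) (Finset.sum_neg_distrib _)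
  rw [← Pi.single_add, ← Pi.single_neg]
  congr 1
  simp only [diagonalField_apply, hc, hv, if_true, if_false,
    deriv_fun_mul (hg v hv _) (hh v hv _)]
  ring

theorem double_commutator_diagonal_general [Fintype ι]
    {L : (ι → 𝕜) → (ι → 𝕜) →L[𝕜] ι → 𝕜} {F : (ι → 𝕜) → ι → 𝕜}
    (hL : Differentiable 𝕜 L) (hF : Differentiable 𝕜 F) (hc : c ∉ T)
    (hg : ∀ v ∈ T, ContDiff 𝕜 2 (g v)) (hh : ∀ v ∈ T, Differentiable 𝕜 (h v)) :
    VectorField.lieBracket 𝕜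
        (VectorField.lieBracket 𝕜 (secondOrderField L F) (verticalLift (diagonalField T c δ g)))
        (verticalLift (diagonalField T c δ h))
      = verticalLift (diagonalField T c δ fun v => deriv fun t => g v t * h v t) := by
  have hB : Differentiable 𝕜 (diagonalField T c δ h) := fun q =>
    (hasFDerivAt_diagonalField fun v hv => hh v hv _).differentiableAt
  rw [lieBracket_lieBracket_secondOrderField_verticalLift hL hF (contDiff_diagonalField hg) hB,
    symmetricProduct_diagonalField hc (fun v hv => (hg v hv).differentiable two_ne_zero) hh,
    neg_neg]

end DiagonalField

section Network

variable {V : Type} [Fintype V]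

lemma lieB_eq_lieBracket (Y Z : Phase V → Phase V) : lieB Y Z = VectorField.lieBracket ℝ Y Z :=
  rfl

variable (G : SimpleGraph V) [DecidableRel G.Adj]

/-- The force `-U_v'(q_v) - ∑_{w ~ v} V_{vw}'(q_v - q_w)` of the network on each vertex `v`. -/
def networkForce (U : V → ℝ → ℝ) (Vp : V → V → ℝ[X]) : (V → ℝ) → V → ℝ :=
  fun q v => -deriv (U v) (q v) - ∑ w with G.Adj v w, (derivative (Vp v w)).eval (q v - q w)

lemma differentiable_networkForce {U : V → ℝ → ℝ} (hU : ∀ v, Differentiable ℝ (deriv (U v)))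
    (Vp : V → V → ℝ[X]) : Differentiable ℝ (networkForce G U Vp) := by
  refine differentiable_pi.2 fun v => ?_
  have hpin : Differentiable ℝ fun q : V → ℝ => deriv (U v) (q v) :=
    (hU v).comp (differentiable_apply v)
  have hint (w : V) : Differentiable ℝ fun q : V → ℝ => (derivative (Vp v w)).eval (q v - q w) :=
    (derivative (Vp v w)).differentiable.comp (by fun_prop)
  exact hpin.neg.sub (Differentiable.fun_sum fun w _ => hint w)

lemma X0_eq_secondOrderField [DecidableEq V] (γ : V → ℝ) (U : V → ℝ → ℝ) (Vp : V → V → ℝ[X]) :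
    X0 G γ U Vp = secondOrderField
      (fun _ => ContinuousLinearMap.piMap fun v => -γ v • ContinuousLinearMap.id ℝ ℝ)
      (networkForce G U Vp) := by
  funext x
  ext v <;> simp [X0, secondOrderField, fiberAffine, networkForce, sub_eq_add_neg, add_assoc]

lemma notMem_Tset_self [DecidableEq V] (c : V) : c ∉ Tset G c := by
  simp [Tset]

end Network

/-- Lemma 4.8. For smooth functions `g_v, h_v`, `v ∈ 𝒯`, the double
commutator `⟪Y, Z⟫ = [[X₀, Y], Z]` of the diagonal fields `Y = ∑_{v∈𝒯} g_v(x_v) ∂_{p_v}`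
and `Z = ∑_{v'∈𝒯} h_{v'}(x_{v'}) ∂_{p_{v'}}` equals `∑_{v∈𝒯} (g_v h_v)'(x_v) ∂_{p_v}`,
where `x_v = q_c − q_v + δ_{cv}` for real constants `δ_{cv}`. -/
theorem double_commutator_diagonal
    {V : Type} [Fintype V] [DecidableEq V] (G : SimpleGraph V) [DecidableRel G.Adj]
    (Vstar : Finset V) (γ : V → ℝ) (U : V → ℝ → ℝ) (Vp : V → V → Polynomial ℝ)
    (hγpos : ∀ v ∈ Vstar, 0 < γ v) (hγ0 : ∀ v ∉ Vstar, γ v = 0)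
    (hU : ∀ v, ContDiff ℝ (⊤ : ℕ∞) (U v))
    (hsym : ∀ u v, G.Adj u v → ∀ x : ℝ, (Vp v u).eval x = (Vp u v).eval (-x))
    (hdeg : ∀ u v, G.Adj u v → 3 ≤ (Vp u v).natDegree)
    (c : V) (δ : V → ℝ) (g h : V → ℝ → ℝ)
    (hg : ∀ v, ContDiff ℝ (⊤ : ℕ∞) (g v)) (hh : ∀ v, ContDiff ℝ (⊤ : ℕ∞) (h v)) :
    lieB
      (lieB (X0 G γ U Vp)
        (fun x => ((0 : V → ℝ),
          ∑ v ∈ Tset G c, Pi.single v (g v (x.1 c - x.1 v + δ v)))))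
      (fun x => ((0 : V → ℝ),
        ∑ v ∈ Tset G c, Pi.single v (h v (x.1 c - x.1 v + δ v))))
    = fun x => ((0 : V → ℝ),
        ∑ v ∈ Tset G c,
          Pi.single v (deriv (fun t => g v t * h v t) (x.1 c - x.1 v + δ v))) := by
  have hF : Differentiable ℝ (networkForce G U Vp) :=
    differentiable_networkForce G (fun v => (contDiff_infty.1 (hU v) 2).differentiable_deriv_two) Vp
  rw [X0_eq_secondOrderField, lieB_eq_lieBracket, lieB_eq_lieBracket]
  exact double_commutator_diagonal_general (differentiable_const _) hF (notMem_Tset_self G c)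
    (fun v _ => contDiff_infty.1 (hg v) 2) fun v _ => (hh v).differentiable (by simp)
end
end

section
/- Assume the vertex c is controllable. Then for each value b ∈ B_d^d, both ∑_{v∈D^d : b_{vd}=b} x_v ∂_{p_v} ∈ 𝓜 and ∑_{v∈D^d : b_{vd}=b} ∂_{p_v} ∈ 𝓜. Consequently, ∑_{v∈D^d} x_v ∂_{p_v} ∈ 𝓜 and ∑_{v∈D^d} ∂_{p_v} ∈ 𝓜. -/
/-!
For polynomials `g_v` put `F_g = ∑_{v ~ c} g_v(q_c - q_v) ∂_{p_v}`, and let `β_v` be the coefficient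
`b_{vd}` of a neighbor `v` of `c`, which is nonzero exactly when `v ∈ D^d`.

A direct computation gives `[∂_{q_c}, F_g] = F_{g'}` and `[F_g, [F_h, X₀]] = F_{(gh)'}`, while
`[∂_{q_c}, X₀]` equals `F_{V''}` up to a multiple of `∂_{p_c}`. Hence `F_{V''} ∈ 𝓜`, and `d - 1`
further brackets with `∂_{q_c}` yield `F_Z ∈ 𝓜` where `Z_v` is affine with slope `β_v`, namely
`Z_v = β_v (X + δ_{cv})` for `v ∈ D^d`, and constant otherwise. Because `(a_v Z_v · Z_v)' =
2 a_v β_v Z_v`, the double bracket multiplies the coefficients of `F_{a Z}` by `β_v`, so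
`F_{P(β) Z} ∈ 𝓜` for every polynomial `P`. By Lagrange interpolation `P` may be replaced by any
function `φ`; with `φ(b) = 1 / b` on the selected nonzero values and `φ = 0` elsewhere this is the
sum of the `x_v ∂_{p_v}`, and one more bracket with `∂_{q_c}` gives the sum of the `∂_{p_v}`.
-/

open scoped Classical
open Polynomial

noncomputable section

/-! ### Polynomials -/

lemma exists_polynomial_eval_eq {ι F : Type*} [Finite ι] [Field F] (β : ι → F) (φ : F → F) :
    ∃ P : F[X], ∀ i, P.eval (β i) = φ (β i) := by
  have := Fintype.ofFinite ι
  exact ⟨Lagrange.interpolate (Finset.univ.image β) id φ, fun i =>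
    Lagrange.eval_interpolate_at_node φ (Set.injOn_id _)
      (Finset.mem_image_of_mem β (Finset.mem_univ i))⟩

lemma eval_derivative_derivative_neg {R : Type*} [CommRing R] [IsDomain R] [Infinite R]
    {f g : R[X]} (h : ∀ x, f.eval x = g.eval (-x)) (x : R) :
    (derivative (derivative f)).eval x = (derivative (derivative g)).eval (-x) := by
  have hfg : f = g.comp (-X) := Polynomial.funext fun y => by simp [h y]
  simp [hfg, derivative_comp]

lemma iterate_derivative_eq_C_of_natDegree_le {R : Type*} [Semiring R] {g : R[X]} {n : ℕ}
    (hg : g.natDegree ≤ n) : derivative^[n] g = C (n.factorial * g.coeff n) := by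
  have hdeg : (derivative^[n] g).natDegree ≤ 0 := (natDegree_iterate_derivative g n).trans (by lia)
  rw [eq_C_of_natDegree_le_zero hdeg, coeff_iterate_derivative, zero_add, Nat.descFactorial_self,
    nsmul_eq_mul]

lemma iterate_derivative_eq_smul_X_add_adjShift {g : ℝ[X]} {n : ℕ} (hg : g.natDegree = n + 1) :
    derivative^[n] g = ((n + 1).factorial * g.coeff (n + 1)) • (X + C (adjShift g)) := by
  have hdeg : (derivative^[n] g).natDegree ≤ 1 :=
    (natDegree_iterate_derivative g n).trans (by lia)
  have hfac : (n + 1).descFactorial n = (n + 1).factorial := by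
    simpa using (n + 1).factorial_mul_descFactorial n.le_succ
  have hlead : g.coeff (n + 1) ≠ 0 := by
    rw [← hg, ← leadingCoeff, leadingCoeff_ne_zero]
    exact ne_zero_of_natDegree_gt (n.succ_pos.trans_eq hg.symm)
  have hshift : (n + 1).factorial * g.coeff (n + 1) * adjShift g = n.factorial * g.coeff n := by
    have hn : (n : ℝ) + 1 ≠ 0 := by positivity
    rw [adjShift, leadingCoeff, hg, Nat.add_sub_cancel, Nat.factorial_succ]
    push_cast
    field_simp
  rw [eq_X_add_C_of_natDegree_le_one hdeg, coeff_iterate_derivative, coeff_iterate_derivative,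
    zero_add, add_comm 1 n, hfac, Nat.descFactorial_self, nsmul_eq_mul, nsmul_eq_mul, ← hshift,
    smul_eq_C_mul, mul_add, C_mul (b := adjShift g)]

lemma adjRep_eq_taylor (g : ℝ[X]) : adjRep g = taylor (-adjShift g) g := by
  rw [adjRep, taylor_apply, C_neg, sub_eq_add_neg]

lemma coeff_adjRep_of_natDegree_le {g : ℝ[X]} {m : ℕ} (hg : g.natDegree ≤ m) :
    (adjRep g).coeff m = g.coeff m := by
  rw [adjRep_eq_taylor]
  rcases hg.eq_or_lt with rfl | hlt
  · exact coeff_taylor_natDegree _ _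
  · rw [coeff_eq_zero_of_natDegree_lt hlt,
      coeff_eq_zero_of_natDegree_lt ((natDegree_taylor g _).trans_lt hlt)]

/-! ### Derivatives of the interaction fields -/

section EdgeField

variable {V : Type}

/-- The position `q_v` of the vertex `v`, as a continuous linear functional on phase space. -/
def posCoord (v : V) : Phase V →L[ℝ] ℝ :=
  (ContinuousLinearMap.proj (φ := fun _ : V => ℝ) v).comp (.fst ℝ (V → ℝ) (V → ℝ))

/-- The momentum `p_v` of the vertex `v`, as a continuous linear functional on phase space. -/
def momCoord (v : V) : Phase V →L[ℝ] ℝ :=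
  (ContinuousLinearMap.proj (φ := fun _ : V => ℝ) v).comp (.snd ℝ (V → ℝ) (V → ℝ))

@[simp]
lemma posCoord_apply (v : V) (x : Phase V) : posCoord v x = x.1 v := rfl

@[simp]
lemma momCoord_apply (v : V) (x : Phase V) : momCoord v x = x.2 v := rfl

variable (G : SimpleGraph V) [DecidableRel G.Adj] (c : V)

/-- The force exerted on the vertex `v` when each neighbor `v` of `c` feels the force
`g_v(q_c - q_v)` and all other vertices, in particular `c` itself, feel none. -/
def edgeForce (g : V → ℝ[X]) (x : Phase V) (v : V) : ℝ :=
  if G.Adj c v then (g v).eval (x.1 c - x.1 v) else 0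

/-- The vector field `∑_{v ~ c} g_v(q_c - q_v) ∂_{p_v}`. -/
def edgeField (g : V → ℝ[X]) : Phase V → Phase V :=
  fun x => (0, edgeForce G c g x)

variable {G c}

@[simp]
lemma edgeForce_self (g : V → ℝ[X]) (x : Phase V) : edgeForce G c g x c = 0 := by
  simp [edgeForce]

lemma edgeField_congr {g h : V → ℝ[X]} (hgh : ∀ v, G.Adj c v → g v = h v) :
    edgeField G c g = edgeField G c h := by
  ext x v
  · rfl
  · exact if_ctx_congr Iff.rfl (fun hv => by rw [hgh v hv]) fun _ => rfl

lemma edgeField_add (g h : V → ℝ[X]) :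
    edgeField G c (g + h) = edgeField G c g + edgeField G c h := by
  ext x v
  · simp [edgeField]
  · by_cases hv : G.Adj c v <;> simp [edgeField, edgeForce, hv]

lemma edgeField_smul (r : ℝ) (g : V → ℝ[X]) : edgeField G c (r • g) = r • edgeField G c g := by
  ext x v
  · simp [edgeField]
  · simp [edgeField, edgeForce]

variable [Finite V]

lemma hasFDerivAt_eval_sub (f : ℝ[X]) (u v : V) (x : Phase V) :
    HasFDerivAt (fun y : Phase V => f.eval (y.1 u - y.1 v))
      ((derivative f).eval (x.1 u - x.1 v) • (posCoord u - posCoord v)) x := by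
  have := Fintype.ofFinite V
  exact (f.hasDerivAt _).comp_hasFDerivAt x (posCoord u - posCoord v).hasFDerivAt

lemma hasFDerivAt_edgeForce (g : V → ℝ[X]) (x : Phase V) (v : V) :
    HasFDerivAt (fun y => edgeForce G c g y v)
      (edgeForce G c (fun v => derivative (g v)) x v • (posCoord c - posCoord v)) x := by
  by_cases hv : G.Adj c v
  · simpa only [edgeForce, if_pos hv] using hasFDerivAt_eval_sub (g v) c v x
  · simpa only [edgeForce, if_neg hv, zero_smul] using hasFDerivAt_const (0 : ℝ) x

lemma fderiv_edgeField_apply (g : V → ℝ[X]) (x w : Phase V) :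
    fderiv ℝ (edgeField G c g) x w =
      (0, fun v => edgeForce G c (fun v => derivative (g v)) x v * (w.1 c - w.1 v)) := by
  have := Fintype.ofFinite V
  have h : HasFDerivAt (edgeField G c g) _ x :=
    (hasFDerivAt_const 0 x).prodMk (hasFDerivAt_pi.2 (hasFDerivAt_edgeForce g x))
  rw [h.fderiv]
  ext v <;> simp

end EdgeField

/-! ### Lie brackets of the interaction fields -/

section Bracket

variable {V : Type} [Fintype V] [DecidableEq V] {G : SimpleGraph V} [DecidableRel G.Adj] {c : V}

lemma lieB_dq (Y : Phase V → Phase V) :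
    lieB (dq c) Y = fun x => fderiv ℝ Y x (Pi.single c 1, 0) := by
  funext x
  have hconst : fderiv ℝ (dq c) x = 0 := fderiv_const_apply _
  simp [lieB, hconst, dq]

lemma lieB_dq_edgeField (g : V → ℝ[X]) :
    lieB (dq c) (edgeField G c g) = edgeField G c fun v => derivative (g v) := by
  rw [lieB_dq]
  ext x v
  · simp [fderiv_edgeField_apply, edgeField]
  · rcases eq_or_ne v c with rfl | hv
    · simp [fderiv_edgeField_apply, edgeField]
    · simp [fderiv_edgeField_apply, edgeField, hv]

variable {γ : V → ℝ} {U : V → ℝ → ℝ} {Vp : V → V → ℝ[X]}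

lemma fderiv_X0_apply (hU : ∀ v, Differentiable ℝ (deriv (U v))) (x w : Phase V) :
    fderiv ℝ (X0 G γ U Vp) x w = (w.2, fun v =>
      -γ v * w.2 v - deriv (deriv (U v)) (x.1 v) * w.1 v -
        ∑ u ∈ Finset.univ.filter (fun u => G.Adj v u),
          (derivative (derivative (Vp v u))).eval (x.1 v - x.1 u) * (w.1 v - w.1 u)) := by
  have hX : HasFDerivAt (X0 G γ U Vp) _ x :=
    hasFDerivAt_snd.prodMk (hasFDerivAt_pi.2 fun v =>
      (((momCoord v).hasFDerivAt.const_mul (-γ v)).sub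
        ((hU v (x.1 v)).hasDerivAt.comp_hasFDerivAt x (posCoord v).hasFDerivAt)).sub
        (HasFDerivAt.fun_sum fun u _ => hasFDerivAt_eval_sub (derivative (Vp v u)) v u x))
  rw [hX.fderiv]
  ext v <;> simp

lemma lieB_edgeField_X0 (hU : ∀ v, Differentiable ℝ (deriv (U v))) (g : V → ℝ[X]) :
    lieB (edgeField G c g) (X0 G γ U Vp) = fun x => (edgeForce G c g x, fun v =>
      -γ v * edgeForce G c g x v -
        edgeForce G c (fun v => derivative (g v)) x v * (x.2 c - x.2 v)) := by
  funext x
  simp only [lieB, fderiv_X0_apply hU, fderiv_edgeField_apply]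
  ext v <;> simp [edgeField, X0]

/-- The term `g h'` comes from the change of `p_v` along the first field, the term `g' h` from the
change of `q_v` along the inner bracket; nothing else appears because neither of them moves `c`. -/
lemma lieB_edgeField_lieB_edgeField_X0 (hU : ∀ v, Differentiable ℝ (deriv (U v)))
    (g h : V → ℝ[X]) :
    lieB (edgeField G c g) (lieB (edgeField G c h) (X0 G γ U Vp)) =
      edgeField G c fun v => derivative (g v * h v) := by
  rw [lieB_edgeField_X0 hU]
  funext x
  have hW : HasFDerivAt (fun x => (edgeForce G c h x, fun v => -γ v * edgeForce G c h x v -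
      edgeForce G c (fun v => derivative (h v)) x v * (x.2 c - x.2 v))) _ x :=
    (hasFDerivAt_pi.2 (hasFDerivAt_edgeForce h x)).prodMk (hasFDerivAt_pi.2 fun v =>
      ((hasFDerivAt_edgeForce h x v).const_mul (-γ v)).sub
        ((hasFDerivAt_edgeForce _ x v).mul (momCoord c - momCoord v).hasFDerivAt))
  simp only [lieB, hW.fderiv, fderiv_edgeField_apply]
  ext v
  · simp [edgeField]
  · by_cases hv : G.Adj c v <;> simp [edgeField, edgeForce, hv, mul_comm, add_comm]

/-- The second derivative of the total potential energy in the position `q_c`. -/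
def selfStiffness (G : SimpleGraph V) [DecidableRel G.Adj] (U : V → ℝ → ℝ) (Vp : V → V → ℝ[X])
    (c : V) (x : Phase V) : ℝ :=
  deriv (deriv (U c)) (x.1 c) +
    ∑ v ∈ Tset G c, (derivative (derivative (Vp c v))).eval (x.1 c - x.1 v)

lemma contDiff_selfStiffness {n : WithTop ℕ∞} (hU : ContDiff ℝ n (deriv (deriv (U c)))) :
    ContDiff ℝ n (selfStiffness G U Vp c) := by
  refine (hU.comp (by fun_prop)).add (ContDiff.sum fun v _ => ?_)
  exact (by simpa using (derivative (derivative (Vp c v))).contDiff_aeval (𝕜 := ℝ) n :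
    ContDiff ℝ n fun y : ℝ => (derivative (derivative (Vp c v))).eval y).comp (by fun_prop)

lemma lieB_dq_X0 (hU : ∀ v, Differentiable ℝ (deriv (U v)))
    (hsym : ∀ v, G.Adj c v → ∀ x : ℝ, (Vp v c).eval x = (Vp c v).eval (-x)) :
    lieB (dq c) (X0 G γ U Vp) = edgeField G c (fun v => derivative (derivative (Vp c v))) +
      fun x => -selfStiffness G U Vp c x • dp c x := by
  rw [lieB_dq]
  ext x v
  · simp [fderiv_X0_apply hU, edgeField, dp]
  rcases eq_or_ne v c with rfl | hv
  · have hsum : ∑ u ∈ Finset.univ.filter (fun u => G.Adj v u),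
        (derivative (derivative (Vp v u))).eval (x.1 v - x.1 u) *
          (1 - (Pi.single v 1 : V → ℝ) u) =
        ∑ u ∈ Tset G v, (derivative (derivative (Vp v u))).eval (x.1 v - x.1 u) := by
      refine Finset.sum_congr rfl fun u hu => ?_
      have huv : u ≠ v := (Finset.mem_filter.1 hu).2.ne'
      rw [Pi.single_eq_of_ne huv, sub_zero, mul_one]
    simp [fderiv_X0_apply hU, edgeField, dp, selfStiffness, hsum, neg_add', -neg_add_rev]
  · by_cases hcv : G.Adj c v
    · simp [fderiv_X0_apply hU, edgeField, edgeForce, dp, hv, Pi.single_apply, G.adj_comm v c,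
        hcv, eval_derivative_derivative_neg (hsym v hcv)]
    · simp [fderiv_X0_apply hU, edgeField, edgeForce, dp, hv, Pi.single_apply, G.adj_comm v c, hcv]

end Bracket

/-! ### Membership in `𝓜` -/

namespace MM

variable {V : Type} [Fintype V] [DecidableEq V] {Vstar : Finset V} {X₀ : Phase V → Phase V}
  {G : SimpleGraph V} [DecidableRel G.Adj] {c : V}

lemma edgeField_derivative {g : V → ℝ[X]} (hg : MM Vstar X₀ (edgeField G c g))
    (hq : MM Vstar X₀ (dq c)) :
    MM Vstar X₀ (edgeField G c fun v => derivative (g v)) :=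
  lieB_dq_edgeField (G := G) g ▸ hq.lie hg

lemma edgeField_iterate_derivative {g : V → ℝ[X]} (hg : MM Vstar X₀ (edgeField G c g))
    (hq : MM Vstar X₀ (dq c)) (n : ℕ) :
    MM Vstar X₀ (edgeField G c fun v => derivative^[n] (g v)) := by
  induction n with
  | zero => exact hg
  | succ n ih => simpa only [Function.iterate_succ_apply'] using ih.edgeField_derivative hq

variable {γ : V → ℝ} {U : V → ℝ → ℝ} {Vp : V → V → ℝ[X]}

lemma edgeField_derivative_mul (hU : ∀ v, Differentiable ℝ (deriv (U v))) {g h : V → ℝ[X]}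
    (hg : MM Vstar (X0 G γ U Vp) (edgeField G c g))
    (hh : MM Vstar (X0 G γ U Vp) (edgeField G c h)) :
    MM Vstar (X0 G γ U Vp) (edgeField G c fun v => derivative (g v * h v)) :=
  lieB_edgeField_lieB_edgeField_X0 (G := G) (γ := γ) (Vp := Vp) hU g h ▸ hg.lie hh.lieX

lemma edgeField_derivative_derivative (hU : ∀ v, ContDiff ℝ (⊤ : ℕ∞) (deriv (U v)))
    (hsym : ∀ v, G.Adj c v → ∀ x : ℝ, (Vp v c).eval x = (Vp c v).eval (-x))
    (hc : Controllable Vstar (X0 G γ U Vp) c) :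
    MM Vstar (X0 G γ U Vp) (edgeField G c fun v => derivative (derivative (Vp c v))) := by
  have hstiff := hc.2.mulS (selfStiffness G U Vp c)
    (contDiff_selfStiffness (contDiff_infty_iff_deriv.1 (hU c)).2)
  have hsum := hc.1.lieX.add hstiff
  rw [lieB_dq_X0 (fun v => (hU v).differentiable (by simp)) hsym] at hsum
  convert hsum using 1
  ext x v <;> simp

lemma edgeField_mul_slope (hU : ∀ v, Differentiable ℝ (deriv (U v))) {Z : V → ℝ[X]}
    {a β : V → ℝ} (hZ : MM Vstar (X0 G γ U Vp) (edgeField G c Z))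
    (hslope : ∀ v, G.Adj c v → derivative (Z v) = C (β v))
    (ha : MM Vstar (X0 G γ U Vp) (edgeField G c fun v => a v • Z v)) :
    MM Vstar (X0 G γ U Vp) (edgeField G c fun v => (a v * β v) • Z v) := by
  convert (edgeField_derivative_mul hU ha hZ).smul (1 / 2) using 1
  rw [← edgeField_smul]
  refine edgeField_congr fun v hv => ?_
  have hsq : derivative (a v • Z v * Z v) = (2 * (a v * β v)) • Z v := by
    rw [derivative_mul, derivative_smul, hslope v hv]
    simp only [smul_eq_C_mul, map_mul, map_ofNat]
    ring
  rw [Pi.smul_apply, hsq, smul_smul, ← mul_assoc, one_div, inv_mul_cancel₀ two_ne_zero, one_mul]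

lemma edgeField_polynomial_slope (hU : ∀ v, Differentiable ℝ (deriv (U v))) {Z : V → ℝ[X]}
    {β : V → ℝ} (hZ : MM Vstar (X0 G γ U Vp) (edgeField G c Z))
    (hslope : ∀ v, G.Adj c v → derivative (Z v) = C (β v)) (P : ℝ[X]) :
    MM Vstar (X0 G γ U Vp) (edgeField G c fun v => P.eval (β v) • Z v) := by
  induction P using Polynomial.induction_on with
  | C r =>
    simp only [eval_C]
    exact edgeField_smul (G := G) r Z ▸ hZ.smul r
  | add P Q hP hQ =>
    simp only [eval_add, add_smul]
    exact edgeField_add (G := G) (fun v => P.eval (β v) • Z v) _ ▸ hP.add hQ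
  | monomial n r ih =>
    simp only [pow_succ, ← mul_assoc, eval_mul, eval_C, eval_pow, eval_X] at ih ⊢
    exact edgeField_mul_slope hU hZ hslope ih

lemma edgeField_comp_slope (hU : ∀ v, Differentiable ℝ (deriv (U v))) {Z : V → ℝ[X]}
    {β : V → ℝ} (hZ : MM Vstar (X0 G γ U Vp) (edgeField G c Z))
    (hslope : ∀ v, G.Adj c v → derivative (Z v) = C (β v)) (φ : ℝ → ℝ) :
    MM Vstar (X0 G γ U Vp) (edgeField G c fun v => φ (β v) • Z v) := by
  obtain ⟨P, hP⟩ := exists_polynomial_eval_eq β φ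
  simpa only [hP] using edgeField_polynomial_slope hU hZ hslope P

end MM

/-! ### The neighbors of maximal degree -/

section TopDegree

variable {V : Type} [Fintype V] [DecidableEq V] {G : SimpleGraph V} [DecidableRel G.Adj]
  {Vp : V → V → ℝ[X]} {c : V}

lemma natDegree_ft_le_dmax {v : V} (hv : G.Adj c v) :
    (ft Vp c v).natDegree ≤ dmax G Vp c :=
  Finset.le_sup (f := fun v => (ft Vp c v).natDegree) (by simpa [Tset] using hv)

lemma natDegree_derivative_derivative_le_dmax {v : V} (hv : G.Adj c v) :
    (derivative (derivative (Vp c v))).natDegree ≤ dmax G Vp c := by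
  simpa [ft, adjRep_eq_taylor] using natDegree_ft_le_dmax (Vp := Vp) hv

lemma bcoef_dmax {v : V} (hv : G.Adj c v) :
    bcoef Vp c v (dmax G Vp c) =
      (dmax G Vp c).factorial * (derivative (derivative (Vp c v))).coeff (dmax G Vp c) := by
  rw [bcoef, ft, coeff_adjRep_of_natDegree_le (natDegree_derivative_derivative_le_dmax hv)]

lemma mem_Dd_iff (hd : 0 < dmax G Vp c) {v : V} :
    v ∈ Dd G Vp c ↔ G.Adj c v ∧ bcoef Vp c v (dmax G Vp c) ≠ 0 := by
  simp only [Dd, Tset, Finset.mem_filter, Finset.mem_univ, true_and, bcoef, ne_eq, mul_eq_zero,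
    Nat.cast_eq_zero, Nat.factorial_ne_zero, false_or]
  refine and_congr_right fun hv => ⟨fun hdeg h0 => ?_, fun h0 => ?_⟩
  · rw [← hdeg] at h0 hd
    exact ne_zero_of_natDegree_gt hd (leadingCoeff_eq_zero.1 h0)
  · exact (natDegree_ft_le_dmax hv).antisymm (le_natDegree_of_ne_zero h0)

lemma dmax_pos {v : V} (hv : v ∈ Dd G Vp c) (hdeg : 3 ≤ (Vp c v).natDegree) :
    0 < dmax G Vp c := by
  have hvd : (ft Vp c v).natDegree = dmax G Vp c := (Finset.mem_filter.1 hv).2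
  rw [← hvd, ft, adjRep_eq_taylor, natDegree_taylor, natDegree_derivative, natDegree_derivative]
  lia

lemma inv_bcoef_smul_iterate_derivative {v : V} {n : ℕ} (hn : dmax G Vp c = n + 1)
    (hv : v ∈ Dd G Vp c) :
    (bcoef Vp c v (dmax G Vp c))⁻¹ • derivative^[n] (derivative (derivative (Vp c v))) =
      X + C (adjShift (derivative (derivative (Vp c v)))) := by
  obtain ⟨hcv, hb⟩ := (mem_Dd_iff (hn ▸ n.succ_pos)).1 hv
  have hdeg : (derivative (derivative (Vp c v))).natDegree = n + 1 := by
    rw [← hn, ← (Finset.mem_filter.1 hv).2, ft, adjRep_eq_taylor, natDegree_taylor]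
  rw [iterate_derivative_eq_smul_X_add_adjShift hdeg, ← hn, ← bcoef_dmax hcv,
    inv_smul_smul₀ hb]

variable {Vstar : Finset V} {γ : V → ℝ} {U : V → ℝ → ℝ}

lemma edgeField_filter_Dd_mem (hU : ∀ v, ContDiff ℝ (⊤ : ℕ∞) (deriv (U v)))
    (hsym : ∀ v, G.Adj c v → ∀ x : ℝ, (Vp v c).eval x = (Vp c v).eval (-x))
    (hc : Controllable Vstar (X0 G γ U Vp) c) (hd : 0 < dmax G Vp c)
    (p : ℝ → Prop) [DecidablePred p] :
    MM Vstar (X0 G γ U Vp) (edgeField G c fun v =>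
      if v ∈ (Dd G Vp c).filter (fun v => p (bcoef Vp c v (dmax G Vp c))) then
        X + C (adjShift (derivative (derivative (Vp c v)))) else 0) := by
  obtain ⟨n, hn⟩ := Nat.exists_eq_add_one.2 hd
  have hZ := (MM.edgeField_derivative_derivative hU hsym hc).edgeField_iterate_derivative hc.1 n
  have hslope (v : V) (hv : G.Adj c v) :
      derivative (derivative^[n] (derivative (derivative (Vp c v)))) =
        C (bcoef Vp c v (dmax G Vp c)) := by
    rw [← Function.iterate_succ_apply' derivative, Nat.succ_eq_add_one, ← hn, bcoef_dmax hv,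
      iterate_derivative_eq_C_of_natDegree_le (natDegree_derivative_derivative_le_dmax hv)]
  -- Since `0⁻¹ = 0`, neighbors outside `Dd` get the factor `0` whether or not `p 0` holds.
  convert hZ.edgeField_comp_slope (fun v => (hU v).differentiable (by simp)) hslope
    (fun b => if p b then b⁻¹ else 0) using 1
  refine edgeField_congr fun v hcv => ?_
  by_cases hv : v ∈ Dd G Vp c
  · simp [hv, inv_bcoef_smul_iterate_derivative hn]
  · have hb : bcoef Vp c v (dmax G Vp c) = 0 := by simpa [mem_Dd_iff hd, hcv] using hv
    simp [hv, hb]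

lemma edgeField_ite_mem_eq_sum {A : Finset V} (hA : A ⊆ Tset G c) (g : V → ℝ[X]) :
    edgeField G c (fun v => if v ∈ A then g v else 0) =
      fun x => (0, ∑ v ∈ A, Pi.single v ((g v).eval (x.1 c - x.1 v))) := by
  ext x v
  · rfl
  · by_cases hv : v ∈ A
    · have hcv : G.Adj c v := by simpa [Tset] using hA hv
      simp [edgeField, edgeForce, Finset.sum_pi_single, hv, hcv]
    · simp [edgeField, edgeForce, Finset.sum_pi_single, hv]

end TopDegree

theorem top_degree_fields_mem_general
    {V : Type} [Fintype V] [DecidableEq V] (G : SimpleGraph V) [DecidableRel G.Adj]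
    (Vstar : Finset V) (γ : V → ℝ) (U : V → ℝ → ℝ) (Vp : V → V → Polynomial ℝ)
    (hU : ∀ v, ContDiff ℝ (⊤ : ℕ∞) (U v)) (c : V)
    (hsym : ∀ v, G.Adj c v → ∀ x : ℝ, (Vp v c).eval x = (Vp c v).eval (-x))
    (hdeg : ∀ v ∈ Dd G Vp c, 3 ≤ (Vp c v).natDegree)
    (hc : Controllable Vstar (X0 G γ U Vp) c) (p : ℝ → Prop) [DecidablePred p] :
    MM Vstar (X0 G γ U Vp) (fun x => ((0 : V → ℝ),
      ∑ v ∈ (Dd G Vp c).filter (fun v => p (bcoef Vp c v (dmax G Vp c))),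
        Pi.single v (xv Vp c v x))) ∧
    MM Vstar (X0 G γ U Vp)
      (dpSum ((Dd G Vp c).filter fun v => p (bcoef Vp c v (dmax G Vp c)))) := by
  set A := (Dd G Vp c).filter fun v => p (bcoef Vp c v (dmax G Vp c)) with hA
  rcases (Dd G Vp c).eq_empty_or_nonempty with hD | ⟨u, hu⟩
  · have hzero : MM Vstar (X0 G γ U Vp) (fun _ => 0) := by simpa using hc.1.mulS 0 contDiff_const
    have hA_empty : A = ∅ := by simp [A, hD]
    rw [hA_empty]
    exact ⟨hzero, hzero⟩
  have hAT : A ⊆ Tset G c := (Finset.filter_subset _ _).trans (Finset.filter_subset _ _)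
  have hlin := edgeField_filter_Dd_mem (fun v => (contDiff_infty_iff_deriv.1 (hU v)).2) hsym hc
    (dmax_pos hu (hdeg u hu)) p
  have hconst := hlin.edgeField_derivative hc.1
  rw [← hA] at hlin
  simp only [← hA, apply_ite derivative, derivative_zero, derivative_X_add_C] at hconst
  rw [edgeField_ite_mem_eq_sum hAT] at hlin hconst
  simp only [eval_add, eval_X, eval_C, eval_one] at hlin hconst
  exact ⟨hlin, hconst⟩

/-- Lemma 4.7 (i)–(ii). Assume `c` is controllable. Then for each
value `b ∈ B_d^d` (i.e. `b = b_{v₀d}` for some `v₀ ∈ D^d`), both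
`∑_{v∈D^d : b_{vd}=b} x_v ∂_{p_v} ∈ 𝓜` and `∑_{v∈D^d : b_{vd}=b} ∂_{p_v} ∈ 𝓜`.
Consequently `∑_{v∈D^d} x_v ∂_{p_v} ∈ 𝓜` and `∑_{v∈D^d} ∂_{p_v} ∈ 𝓜`. -/
theorem top_degree_fields_mem
    {V : Type} [Fintype V] [DecidableEq V] (G : SimpleGraph V) [DecidableRel G.Adj]
    (Vstar : Finset V) (γ : V → ℝ) (U : V → ℝ → ℝ) (Vp : V → V → Polynomial ℝ)
    (hγpos : ∀ v ∈ Vstar, 0 < γ v) (hγ0 : ∀ v ∉ Vstar, γ v = 0)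
    (hU : ∀ v, ContDiff ℝ (⊤ : ℕ∞) (U v))
    (hsym : ∀ u v, G.Adj u v → ∀ x : ℝ, (Vp v u).eval x = (Vp u v).eval (-x))
    (hdeg : ∀ u v, G.Adj u v → 3 ≤ (Vp u v).natDegree)
    (c : V) (hc : Controllable Vstar (X0 G γ U Vp) c) :
    (∀ v₀ ∈ Dd G Vp c,
      MM Vstar (X0 G γ U Vp)
        (fun x => ((0 : V → ℝ),
          ∑ v ∈ (Dd G Vp c).filter
              (fun v => bcoef Vp c v (dmax G Vp c) = bcoef Vp c v₀ (dmax G Vp c)),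
            Pi.single v (xv Vp c v x))) ∧
      MM Vstar (X0 G γ U Vp)
        (dpSum ((Dd G Vp c).filter
          (fun v => bcoef Vp c v (dmax G Vp c) = bcoef Vp c v₀ (dmax G Vp c))))) ∧
    MM Vstar (X0 G γ U Vp)
      (fun x => ((0 : V → ℝ), ∑ v ∈ Dd G Vp c, Pi.single v (xv Vp c v x))) ∧
    MM Vstar (X0 G γ U Vp) (dpSum (Dd G Vp c)) := by
  have h (p : ℝ → Prop) := top_degree_fields_mem_general G Vstar γ U Vp hU c (hsym c)
    (fun v hv => hdeg c v (by simp_all [Dd, Tset])) hc p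
  exact ⟨fun v₀ _ => h (· = bcoef Vp c v₀ (dmax G Vp c)), by simpa using h fun _ => True⟩
end
end
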